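/- For the full shift T on X = ∏_{n∈ℤ} M over a perfect Polish metric space M, the set {μ ∈ M(T) : R̲(x) = 0 for μ-a.e. x ∈ X} of invariant measures whose lower recurrence rate vanishes almost everywhere is a dense Gδ subset of M(T). -/

import Mathlib

open Filter MeasureTheory Topology Metric Set
open scoped ENNReal NNReal

noncomputable section
attribute [local instance] Classical.propDecidable

/-- The full (bilateral) shift on the product space `ℤ → M`: `(T x) i = x (i - 1)`. -/
def fullShift {M : Type*} (x : ℤ → M) : ℤ → M := fun i => x (i - 1)

/-- The metric `d(x,y) = ∑_{n ∈ ℤ} 2^{-|n|} ρ(xₙ,yₙ)/(1 + ρ(xₙ,yₙ))` on `ℤ → M`,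
compatible with the product topology. -/
def shiftDist {M : Type*} [MetricSpace M] (x y : ℤ → M) : ℝ :=
  ∑' n : ℤ, (1 / 2 : ℝ) ^ n.natAbs * (dist (x n) (y n) / (1 + dist (x n) (y n)))

/-- Lower local dimension `d̲_μ(x) = liminf_{ε → 0⁺} log μ(B(x,ε)) / log ε` of `μ` at `x`,
with respect to the distance function `d`; by convention it is `∞` if some ball
centered at `x` has measure zero. -/
def lowerLocalDim {X : Type*} [MeasurableSpace X] (d : X → X → ℝ)
    (μ : Measure X) (x : X) : ℝ≥0∞ :=
  if ∃ ε > 0, μ {y | d x y < ε} = 0 then ⊤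
  else liminf (fun ε : ℝ =>
    ENNReal.ofReal (Real.log (μ {y | d x y < ε}).toReal / Real.log ε)) (𝓝[>] (0 : ℝ))

/-- Upper local dimension `d̄_μ(x) = limsup_{ε → 0⁺} log μ(B(x,ε)) / log ε`. -/
def upperLocalDim {X : Type*} [MeasurableSpace X] (d : X → X → ℝ)
    (μ : Measure X) (x : X) : ℝ≥0∞ :=
  if ∃ ε > 0, μ {y | d x y < ε} = 0 then ⊤
  else limsup (fun ε : ℝ =>
    ENNReal.ofReal (Real.log (μ {y | d x y < ε}).toReal / Real.log ε)) (𝓝[>] (0 : ℝ))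

/-- The ratio `log τ_r(x) / (- log r)`, where `τ_r(x) = inf {n ≥ 1 | Tⁿ x ∈ B̄(x,r)}` is the
first return time of `x` to the closed ball `B̄(x,r)`; by convention it is `∞` when the
return time is infinite. -/
def recRatio {X : Type*} (d : X → X → ℝ) (T : X → X) (x : X) (r : ℝ) : ℝ≥0∞ :=
  if ∃ n : ℕ, 1 ≤ n ∧ d (T^[n] x) x ≤ r then
    ENNReal.ofReal
      (Real.log ((sInf {n : ℕ | 1 ≤ n ∧ d (T^[n] x) x ≤ r} : ℕ) : ℝ) / (- Real.log r))
  else ⊤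

/-- Lower recurrence rate `R̲(x) = liminf_{r → 0⁺} log τ_r(x) / (- log r)`. -/
def lowerRecRate {X : Type*} (d : X → X → ℝ) (T : X → X) (x : X) : ℝ≥0∞ :=
  liminf (recRatio d T x) (𝓝[>] (0 : ℝ))

/-- Upper recurrence rate `R̄(x) = limsup_{r → 0⁺} log τ_r(x) / (- log r)`. -/
def upperRecRate {X : Type*} (d : X → X → ℝ) (T : X → X) (x : X) : ℝ≥0∞ :=
  limsup (recRatio d T x) (𝓝[>] (0 : ℝ))

/-- The ratio `log τ_r(x,y) / (- log r)`, where `τ_r(x,y) = inf {n ≥ 1 | Tⁿ x ∈ B̄(y,r)}` is the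
first entrance time of the orbit of `x` into the closed ball `B̄(y,r)`; by convention `∞`
when the entrance time is infinite. -/
def waitRatio {X : Type*} (d : X → X → ℝ) (T : X → X) (x y : X) (r : ℝ) : ℝ≥0∞ :=
  if ∃ n : ℕ, 1 ≤ n ∧ d (T^[n] x) y ≤ r then
    ENNReal.ofReal
      (Real.log ((sInf {n : ℕ | 1 ≤ n ∧ d (T^[n] x) y ≤ r} : ℕ) : ℝ) / (- Real.log r))
  else ⊤

/-- Lower quantitative waiting time indicator `R̲(x,y)`. -/
def lowerWaitRate {X : Type*} (d : X → X → ℝ) (T : X → X) (x y : X) : ℝ≥0∞ :=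
  liminf (waitRatio d T x y) (𝓝[>] (0 : ℝ))

/-- Upper quantitative waiting time indicator `R̄(x,y)`. -/
def upperWaitRate {X : Type*} (d : X → X → ℝ) (T : X → X) (x y : X) : ℝ≥0∞ :=
  limsup (waitRatio d T x y) (𝓝[>] (0 : ℝ))

/-- The entropy `H(P) = ∑_c -μ(P_c) log μ(P_c)` of the finite measurable partition
`P_c = f ⁻¹ {c}` of `X` induced by a map `f` into a finite set. -/
def partitionEntropy {X F : Type*} [MeasurableSpace X] [Fintype F]
    (μ : Measure X) (f : X → F) : ℝ :=
  ∑ c : F, Real.negMulLog ((μ (f ⁻¹' {c})).toReal)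

/-- The Kolmogorov–Sinai (measure-theoretic) entropy `h_μ(T)`: the supremum, over all finite
measurable partitions (coded by measurable maps `f : X → Fin k`), of the limit of
`H(⋁_{i<n} T⁻ⁱ P) / n`. -/
def kolmogorovSinaiEntropy {X : Type*} [MeasurableSpace X] (T : X → X) (μ : Measure X) :
    ℝ≥0∞ :=
  ⨆ (k : ℕ) (f : X → Fin k) (_ : Measurable f),
    ENNReal.ofReal
      (liminf (fun n : ℕ =>
        partitionEntropy μ (fun x (i : Fin n) => f (T^[(i : ℕ)] x)) / n) atTop)

end

/-!
The condition `R̲(x) = 0` says that for every `ε > 0` some return time `n` and radius `r < ε`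
satisfy `d (Tⁿ x) x < r` and `log n < ε (-log r)`. These strict inequalities are open in `x`, so
the points of zero rate form a `Gδ` set, and so do, by the portmanteau theorem, the measures giving
it full mass.

Periodic points have rate zero, so density follows from density of the measures carried by periodic
points. To approximate an invariant `μ`, repeat a block of `N` coordinates of a `μ`-random point
periodically and average the law of the result over `N` successive shifts. By invariance of `μ`, the
`k`-th shift has the law of a `μ`-random point whose window `[k - N, k)` is repeated; these windows
contain any fixed finite set of coordinates except for boundedly many `k`, which the average
ignores.
-/

section RecurrenceRate

variable {X : Type*} {d : X → X → ℝ} {T : X → X} {x : X}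

lemma recRatio_lt_ofReal_iff {r c : ℝ} (hr : r ∈ Ioo 0 1) :
    recRatio d T x r < ENNReal.ofReal c ↔
      ∃ n : ℕ, 1 ≤ n ∧ d (T^[n] x) x ≤ r ∧ Real.log n < c * -Real.log r := by
  have hlog : 0 < -Real.log r := neg_pos.2 (Real.log_neg hr.1 hr.2)
  unfold recRatio
  split_ifs with hex
  · obtain ⟨hτ_pos, hτ_dist⟩ := Nat.sInf_mem (s := {n : ℕ | 1 ≤ n ∧ d (T^[n] x) x ≤ r}) hex
    rw [ENNReal.ofReal_lt_ofReal_iff_of_nonneg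
      (div_nonneg (Real.log_natCast_nonneg _) hlog.le), div_lt_iff₀ hlog]
    refine ⟨fun h => ⟨_, hτ_pos, hτ_dist, h⟩, fun ⟨n, hn, hdist, h⟩ => lt_of_le_of_lt ?_ h⟩
    exact Real.log_le_log (mod_cast hτ_pos) (mod_cast Nat.sInf_le ⟨hn, hdist⟩)
  · simp only [not_top_lt, false_iff]
    exact fun ⟨n, hn, hdist, _⟩ => hex ⟨n, hn, hdist⟩

/-- The points with a return time `n` to an open ball of some radius `r < ε` for which
`log n / (-log r) < ε`. The paper's balls are closed; open balls make this set open. -/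
def quickReturnSet (d : X → X → ℝ) (T : X → X) (ε : ℝ) : Set X :=
  {x | ∃ r ∈ Ioo 0 ε, ∃ n : ℕ, 1 ≤ n ∧ d (T^[n] x) x < r ∧ Real.log n < ε * -Real.log r}

lemma isOpen_quickReturnSet [TopologicalSpace X] (hd : ∀ n, Continuous fun x => d (T^[n] x) x)
    (ε : ℝ) : IsOpen (quickReturnSet d T ε) := by
  simp only [quickReturnSet, ofPred_exists, ofPred_and]
  exact isOpen_iUnion fun r => isOpen_const.inter <| isOpen_iUnion fun n =>
    isOpen_const.inter <| (isOpen_lt (hd n) continuous_const).inter isOpen_const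

lemma mem_quickReturnSet_iff_exists_recRatio_lt {ε : ℝ} (hε : ε ≤ 1) :
    x ∈ quickReturnSet d T ε ↔ ∃ r ∈ Ioo 0 ε, recRatio d T x r < ENNReal.ofReal ε := by
  constructor
  · rintro ⟨r, hr, n, hn, hdist, hlog⟩
    exact ⟨r, hr, (recRatio_lt_ofReal_iff ⟨hr.1, hr.2.trans_le hε⟩).2 ⟨n, hn, hdist.le, hlog⟩⟩
  · rintro ⟨r, hr, hratio⟩
    obtain ⟨n, hn, hdist, hlog⟩ := (recRatio_lt_ofReal_iff ⟨hr.1, hr.2.trans_le hε⟩).1 hratio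
    -- Enlarging `r` slightly turns the closed ball into an open one.
    have hcont : Tendsto (fun s => ε * -Real.log s) (𝓝[>] r) (𝓝 (ε * -Real.log r)) :=
      ((Real.continuousAt_log hr.1.ne').neg.const_mul ε).tendsto.mono_left nhdsWithin_le_nhds
    obtain ⟨s, hlog_s, hrs, hsε⟩ :=
      ((hcont.eventually_const_lt hlog).and (Ioo_mem_nhdsGT hr.2)).exists
    exact ⟨s, ⟨hr.1.trans hrs, hsε⟩, n, hn, hdist.trans_lt hrs, hlog_s⟩

lemma lowerRecRate_eq_zero_iff :
    lowerRecRate d T x = 0 ↔ ∀ k : ℕ, x ∈ quickReturnSet d T (1 / (k + 1)) := by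
  have hle_one (k : ℕ) : 1 / ((k : ℝ) + 1) ≤ 1 := div_le_one_of_le₀ (by simp) (by positivity)
  simp only [mem_quickReturnSet_iff_exists_recRatio_lt (hle_one _)]
  constructor
  · intro h k
    have hk : (0 : ℝ) < 1 / (k + 1) := Nat.one_div_pos_of_nat
    have hlt : lowerRecRate d T x < ENNReal.ofReal (1 / (k + 1)) :=
      h ▸ ENNReal.ofReal_pos.2 hk
    obtain ⟨r, hratio, hr⟩ :=
      ((frequently_lt_of_liminf_lt (by isBoundedDefault) hlt).and_eventually
        (Ioo_mem_nhdsGT hk)).exists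
    exact ⟨r, hr, hratio⟩
  · intro h
    refine le_antisymm (ENNReal.le_of_forall_pos_le_add fun ε hε _ => ?_) zero_le
    rw [zero_add]
    refine liminf_le_of_frequently_le' ((nhdsGT_basis (0 : ℝ)).frequently_iff.2 fun a ha => ?_)
    obtain ⟨k, hk⟩ := exists_nat_one_div_lt (lt_min ha (NNReal.coe_pos.2 hε))
    obtain ⟨r, hr, hratio⟩ := h k
    refine ⟨r, ⟨hr.1, hr.2.trans (lt_min_iff.1 hk).1⟩, hratio.le.trans ?_⟩
    exact ENNReal.ofReal_le_of_le_toReal (lt_min_iff.1 hk).2.le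

lemma lowerRecRate_eq_zero_of_mem_periodicPts (hd : d x x = 0) (hx : x ∈ Function.periodicPts T) :
    lowerRecRate d T x = 0 := by
  obtain ⟨n, hn, hper⟩ := hx
  refine lowerRecRate_eq_zero_iff.2 fun k => ?_
  have hk : (0 : ℝ) < 1 / (k + 1) := Nat.one_div_pos_of_nat
  have hlim : Tendsto (fun r => 1 / ((k : ℝ) + 1) * -Real.log r) (𝓝[>] 0) atTop :=
    (tendsto_neg_atBot_atTop.comp Real.tendsto_log_nhdsGT_zero).const_mul_atTop hk
  obtain ⟨r, hlog, hr⟩ :=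
    ((hlim.eventually_gt_atTop (Real.log n)).and (Ioo_mem_nhdsGT hk)).exists
  exact ⟨r, hr, n, hn, by rw [hper, hd]; exact hr.1, hlog⟩

lemma isGδ_setOf_lowerRecRate_eq_zero [TopologicalSpace X]
    (hd : ∀ n, Continuous fun x => d (T^[n] x) x) : IsGδ {x | lowerRecRate d T x = 0} := by
  simp only [lowerRecRate_eq_zero_iff, ofPred_forall]
  exact IsGδ.iInter_of_isOpen fun k => isOpen_quickReturnSet hd _

end RecurrenceRate

section FullMeasure

lemma isGδ_setOf_le_of_lowerSemicontinuous {X Y : Type*} [TopologicalSpace X] [LinearOrder Y]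
    [TopologicalSpace Y] [OrderTopology Y] [DenselyOrdered Y] [TopologicalSpace.SeparableSpace Y]
    {f : X → Y} (hf : LowerSemicontinuous f) (c : Y) : IsGδ {x | c ≤ f x} := by
  obtain ⟨s, hs_countable, hs_dense⟩ := TopologicalSpace.exists_countable_dense Y
  have heq : {x | c ≤ f x} = ⋂ q ∈ s ∩ Iio c, f ⁻¹' Ioi q := by
    ext x
    simp only [mem_ofPred_eq, mem_iInter, mem_preimage, mem_Ioi]
    refine ⟨fun h q hq => hq.2.trans_le h, fun h => not_lt.1 fun hlt => ?_⟩
    obtain ⟨q, hq, hxq, hqc⟩ := hs_dense.exists_between hlt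
    exact (h q ⟨hq, hqc⟩).not_gt hxq
  rw [heq]
  exact IsGδ.biInter_of_isOpen (hs_countable.mono inter_subset_left)
    fun q _ => hf.isOpen_preimage q

variable {Ω : Type*} [TopologicalSpace Ω] [MeasurableSpace Ω] [OpensMeasurableSpace Ω]
  [HasOuterApproxClosed Ω]

lemma lowerSemicontinuous_measure_of_isOpen {U : Set Ω} (hU : IsOpen U) :
    LowerSemicontinuous fun μ : ProbabilityMeasure Ω => μ.toMeasure U :=
  lowerSemicontinuous_iff_le_liminf.2 fun _ =>
    ProbabilityMeasure.le_liminf_measure_open_of_tendsto tendsto_id hU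

lemma isGδ_setOf_ae_mem {G : Set Ω} (hG : IsGδ G) :
    IsGδ {μ : ProbabilityMeasure Ω | ∀ᵐ x ∂μ.toMeasure, x ∈ G} := by
  obtain ⟨U, hU, rfl⟩ := isGδ_iff_eq_iInter_nat.1 hG
  simp only [mem_iInter, ae_all_iff, ofPred_forall]
  refine IsGδ.iInter fun n => ?_
  have heq : {μ : ProbabilityMeasure Ω | ∀ᵐ x ∂μ.toMeasure, x ∈ U n} =
      {μ | 1 ≤ μ.toMeasure (U n)} :=
    ext fun μ => (mem_ae_iff_prob_eq_one (hU n).measurableSet).trans prob_le_one.ge_iff_eq.symm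
  exact heq ▸ isGδ_setOf_le_of_lowerSemicontinuous (lowerSemicontinuous_measure_of_isOpen (hU n)) 1

end FullMeasure

section OrbitAverage

variable {X : Type*} [MeasurableSpace X] {T : X → X} {ν : Measure X} {N : ℕ}

/-- The average `N⁻¹ ∑_{k < N} Tᵏ_* ν` of `ν` along its orbit under `T`. -/
noncomputable def orbitAverage (T : X → X) (N : ℕ) (ν : Measure X) : Measure X :=
  (N : ℝ≥0∞)⁻¹ • ∑ k ∈ Finset.range N, ν.map T^[k]

lemma map_orbitAverage (hT : Measurable T) (hν : ν.map T^[N] = ν) :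
    (orbitAverage T N ν).map T = orbitAverage T N ν := by
  have hstep (k : ℕ) : (ν.map T^[k]).map T = ν.map T^[k + 1] := by
    rw [Measure.map_map hT (hT.iterate k), Function.iterate_succ']
  have hcycle : ∑ k ∈ Finset.range N, ν.map T^[k + 1] = ∑ k ∈ Finset.range N, ν.map T^[k] := by
    cases N with
    | zero => rfl
    | succ n => rw [Finset.sum_range_succ, hν, Finset.sum_range_succ', Function.iterate_zero,
        Measure.map_id]
  rw [orbitAverage, Measure.map_smul, ← Measure.mapₗ_apply_of_measurable hT, map_sum]
  simp only [Measure.mapₗ_apply_of_measurable hT, hstep, hcycle]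

lemma isProbabilityMeasure_orbitAverage [NeZero N] [IsProbabilityMeasure ν] (hT : Measurable T) :
    IsProbabilityMeasure (orbitAverage T N ν) := by
  have hmass (k : ℕ) : ν.map T^[k] univ = 1 := by
    rw [Measure.map_apply (hT.iterate k) .univ, preimage_univ, measure_univ]
  constructor
  simp only [orbitAverage, Measure.smul_apply, Measure.finsetSum_apply, hmass, Finset.sum_const,
    Finset.card_range, nsmul_eq_mul, mul_one, smul_eq_mul]
  exact ENNReal.inv_mul_cancel (NeZero.ne _) (ENNReal.natCast_ne_top N)

lemma ae_orbitAverage_of_forall {p : X → Prop} (hT : Measurable T) (hp : MeasurableSet {x | p x})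
    (h : ∀ k, ∀ᵐ x ∂ν, p (T^[k] x)) : ∀ᵐ x ∂orbitAverage T N ν, p x :=
  Measure.ae_smul_measure (ae_finsetSum_measure_iff.2 fun k _ =>
    (ae_map_iff (hT.iterate k).aemeasurable hp).2 (h k)) _

lemma integral_orbitAverage {E : Type*} [NormedAddCommGroup E] [NormedSpace ℝ E] {f : X → E}
    (hT : Measurable T) (hf : StronglyMeasurable f) (hint : ∀ k, Integrable (f ∘ T^[k]) ν) :
    ∫ x, f x ∂orbitAverage T N ν =
      (N : ℝ)⁻¹ • ∑ k ∈ Finset.range N, ∫ x, f (T^[k] x) ∂ν := by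
  have hmap (k : ℕ) : ∫ x, f x ∂ν.map T^[k] = ∫ x, f (T^[k] x) ∂ν :=
    integral_map (hT.iterate k).aemeasurable hf.aestronglyMeasurable
  have hint_map (k : ℕ) : Integrable f (ν.map T^[k]) :=
    (integrable_map_measure hf.aestronglyMeasurable (hT.iterate k).aemeasurable).2 (hint k)
  rw [orbitAverage, integral_smul_measure, integral_finsetSum_measure fun k _ => hint_map k,
    ENNReal.toReal_inv, ENNReal.toReal_natCast]
  simp only [hmap]

end OrbitAverage

section WindowAverage

variable {E : Type*} [SeminormedAddCommGroup E] [NormedSpace ℝ E]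

lemma norm_inv_smul_sum_range_sub_le {G : ℕ → E} {v : E} {N : ℕ} [NeZero N] {ε : ℝ} {g : ℕ → ℝ}
    (h : ∀ k < N, ‖G k - v‖ ≤ ε + g k + g (N - 1 - k)) :
    ‖(N : ℝ)⁻¹ • ∑ k ∈ Finset.range N, G k - v‖ ≤
      ε + 2 * ((N : ℝ)⁻¹ * ∑ k ∈ Finset.range N, g k) := by
  have hN : (N : ℝ) ≠ 0 := NeZero.ne _
  have hsub : (N : ℝ)⁻¹ • ∑ k ∈ Finset.range N, G k - v =
      (N : ℝ)⁻¹ • ∑ k ∈ Finset.range N, (G k - v) := by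
    rw [Finset.sum_sub_distrib, Finset.sum_const, Finset.card_range, smul_sub,
      ← Nat.cast_smul_eq_nsmul ℝ, inv_smul_smul₀ hN]
  calc ‖(N : ℝ)⁻¹ • ∑ k ∈ Finset.range N, G k - v‖
      = (N : ℝ)⁻¹ * ‖∑ k ∈ Finset.range N, (G k - v)‖ := by
        rw [hsub, norm_smul, norm_inv, Real.norm_natCast]
    _ ≤ (N : ℝ)⁻¹ * ∑ k ∈ Finset.range N, (ε + g k + g (N - 1 - k)) := by
        gcongr
        exact norm_sum_le_of_le _ fun k hk => h k (Finset.mem_range.1 hk)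
    _ = ε + 2 * ((N : ℝ)⁻¹ * ∑ k ∈ Finset.range N, g k) := by
        rw [Finset.sum_add_distrib, Finset.sum_add_distrib, Finset.sum_range_reflect,
          Finset.sum_const, Finset.card_range, nsmul_eq_mul]
        field_simp
        ring

lemma tendsto_inv_smul_sum_window {G : ℤ → ℤ → E} {v : E} {C : ℝ} (hC : ∀ a b, ‖G a b - v‖ ≤ C)
    (hG : Tendsto (fun p : ℤ × ℤ => G p.1 p.2) (atBot ×ˢ atTop) (𝓝 v)) :
    Tendsto (fun N : ℕ => (N : ℝ)⁻¹ • ∑ k ∈ Finset.range N, G (k - N) k) atTop (𝓝 v) := by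
  rw [Metric.tendsto_atTop']
  intro ε hε
  obtain ⟨m, hm⟩ : ∃ m : ℕ, ∀ a b : ℤ, a < -m → m ≤ b → ‖G a b - v‖ < ε / 2 := by
    have hnear := Metric.tendsto_nhds.1 hG (ε / 2) (half_pos hε)
    obtain ⟨P, hP, Q, hQ, hPQ⟩ := eventually_prod_iff.1 hnear
    obtain ⟨a₀, ha₀⟩ := eventually_atBot.1 hP
    obtain ⟨b₀, hb₀⟩ := eventually_atTop.1 hQ
    refine ⟨max a₀.natAbs b₀.natAbs, fun a b ha hb => ?_⟩
    rw [← dist_eq_norm]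
    exact hPQ (ha₀ a (by omega)) (hb₀ b (by omega))
  -- Only the first and the last `m` windows fail to contain `[-m, m)`.
  let g : ℕ → ℝ := fun k => if k < m then C else 0
  have hg : Tendsto g atTop (𝓝 0) := tendsto_const_nhds.congr' <|
    (eventually_ge_atTop m).mono fun k hk => (if_neg hk.not_gt).symm
  have hbound (N k : ℕ) (hk : k < N) :
      ‖G (k - N) k - v‖ ≤ ε / 2 + g k + g (N - 1 - k) := by
    have hC0 : 0 ≤ C := (norm_nonneg _).trans (hC 0 0)
    have hCk := hC (k - N) k
    dsimp only [g]
    split_ifs with hfirst hlast hlast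
    iterate 3 linarith
    exact (hm (k - N) k (by omega) (by omega)).le.trans (by linarith)
  obtain ⟨N₀, hN₀⟩ := eventually_atTop.1 (hg.cesaro.eventually_lt_const (by positivity : 0 < ε / 4))
  refine ⟨N₀, fun N hN => ?_⟩
  have : NeZero N := ⟨by omega⟩
  rw [dist_eq_norm]
  linarith [norm_inv_smul_sum_range_sub_le (hbound N), hN₀ N hN.le]

end WindowAverage

section FullShift

variable {M : Type*}

lemma iterate_fullShift_apply (n : ℕ) (x : ℤ → M) (i : ℤ) : fullShift^[n] x i = x (i - n) := by
  induction n generalizing i with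
  | zero => simp
  | succ n ih =>
    rw [Function.iterate_succ_apply', fullShift, ih]
    congr 1
    push_cast
    ring

lemma continuous_fullShift [TopologicalSpace M] : Continuous (fullShift : (ℤ → M) → ℤ → M) :=
  continuous_pi fun i => continuous_apply (i - 1)

lemma measurable_fullShift [MeasurableSpace M] : Measurable (fullShift : (ℤ → M) → ℤ → M) :=
  measurable_pi_lambda _ fun i => measurable_pi_apply (i - 1)

lemma shiftDist_self [MetricSpace M] (x : ℤ → M) : shiftDist x x = 0 := by
  simp [shiftDist]

lemma continuous_shiftDist [MetricSpace M] :
    Continuous fun p : (ℤ → M) × (ℤ → M) => shiftDist p.1 p.2 := by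
  have hweights : Summable fun n : ℤ => (1 / 2 : ℝ) ^ n.natAbs :=
    .of_nat_of_neg (by simpa using summable_geometric_two) (by simpa using summable_geometric_two)
  have hpos (p : (ℤ → M) × (ℤ → M)) (i : ℤ) : 0 < 1 + dist (p.1 i) (p.2 i) :=
    add_pos_of_pos_of_nonneg one_pos dist_nonneg
  refine continuous_tsum (fun i => ?_) hweights fun i p => ?_
  · exact continuous_const.mul (.div (by fun_prop) (by fun_prop) fun p => (hpos p i).ne')
  · have hle : dist (p.1 i) (p.2 i) / (1 + dist (p.1 i) (p.2 i)) ≤ 1 :=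
      (div_le_one (hpos p i)).2 (by linarith)
    rw [Real.norm_of_nonneg (by positivity)]
    exact mul_le_of_le_one_right (by positivity) hle

/-- The periodic sequence that repeats the block of `y` on the window `[a, b)`. If `a = b`, it is
`y` itself, since `n % 0 = n`. -/
def periodize (a b : ℤ) (y : ℤ → M) : ℤ → M := fun i => y (a + (i - a) % (b - a))

lemma periodize_apply_of_mem_Ico {a b i : ℤ} (hi : i ∈ Ico a b) (y : ℤ → M) :
    periodize a b y i = y i := by
  rw [periodize, Int.emod_eq_of_lt (by linarith [hi.1]) (by linarith [hi.2]), add_sub_cancel]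

lemma isPeriodicPt_periodize (a : ℤ) (n : ℕ) (y : ℤ → M) :
    Function.IsPeriodicPt fullShift n (periodize a (a + n) y) := by
  ext i
  rw [iterate_fullShift_apply, periodize, periodize, add_sub_cancel_left, sub_right_comm,
    Int.sub_emod_right]

lemma isPeriodicPt_periodize_neg_zero (N : ℕ) (y : ℤ → M) :
    Function.IsPeriodicPt fullShift N (periodize (-N) 0 y) := by
  simpa only [neg_add_cancel] using isPeriodicPt_periodize (-N) N y

lemma iterate_fullShift_periodize (n : ℕ) (a b : ℤ) (y : ℤ → M) :
    fullShift^[n] (periodize a b y) = periodize (a + n) (b + n) (fullShift^[n] y) := by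
  ext i
  simp only [iterate_fullShift_apply, periodize]
  ring_nf

lemma measurable_periodize [MeasurableSpace M] (a b : ℤ) :
    Measurable (periodize a b : (ℤ → M) → ℤ → M) :=
  measurable_pi_lambda _ fun _ => measurable_pi_apply _

lemma tendsto_periodize [TopologicalSpace M] (y : ℤ → M) :
    Tendsto (fun p : ℤ × ℤ => periodize p.1 p.2 y) (atBot ×ˢ atTop) (𝓝 y) := by
  refine tendsto_pi_nhds.2 fun i => tendsto_const_nhds.congr' ?_
  filter_upwards [(eventually_le_atBot i).prod_mk (eventually_gt_atTop i)] with p hp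
  exact (periodize_apply_of_mem_Ico hp y).symm

end FullShift

section PeriodicApproximation

variable {M : Type*} [MeasurableSpace M]

/-- The space `M(T)` of `T`-invariant probability measures. -/
abbrev InvariantProbabilityMeasure {X : Type*} [MeasurableSpace X] (T : X → X) : Type _ :=
  {ν : ProbabilityMeasure X // ν.toMeasure.map T = ν.toMeasure}

/-- The shift-invariant measure obtained from `μ` by repeating the block on `[-N, 0)` periodically
and averaging over one period. -/
noncomputable def periodicApprox (N : ℕ) (μ : Measure (ℤ → M)) : Measure (ℤ → M) :=
  orbitAverage fullShift N (μ.map (periodize (-N) 0))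

variable {N : ℕ} {μ : Measure (ℤ → M)}

lemma map_periodicApprox (N : ℕ) (μ : Measure (ℤ → M)) :
    (periodicApprox N μ).map fullShift = periodicApprox N μ := by
  refine map_orbitAverage measurable_fullShift ?_
  rw [Measure.map_map (measurable_fullShift.iterate N) (measurable_periodize _ _)]
  exact congrArg μ.map (funext (isPeriodicPt_periodize_neg_zero N))

lemma isProbabilityMeasure_periodicApprox [NeZero N] [IsProbabilityMeasure μ] :
    IsProbabilityMeasure (periodicApprox N μ) :=
  have := Measure.isProbabilityMeasure_map (μ := μ) (measurable_periodize (-N) 0).aemeasurable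
  isProbabilityMeasure_orbitAverage measurable_fullShift

variable [TopologicalSpace M] [OpensMeasurableSpace (ℤ → M)]

lemma ae_mem_periodicPts_periodicApprox [T2Space M] [NeZero N] :
    ∀ᵐ x ∂periodicApprox N μ, x ∈ Function.periodicPts fullShift := by
  have hmeas : MeasurableSet {x : ℤ → M | Function.IsPeriodicPt fullShift N x} :=
    (isClosed_eq (continuous_fullShift.iterate N) continuous_id).measurableSet
  have hper : ∀ᵐ x ∂periodicApprox N μ, Function.IsPeriodicPt fullShift N x := by
    refine ae_orbitAverage_of_forall measurable_fullShift hmeas fun k => ?_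
    refine (ae_map_iff (measurable_periodize _ _).aemeasurable
      ((measurable_fullShift.iterate k) hmeas)).2 (.of_forall fun y => ?_)
    exact (isPeriodicPt_periodize_neg_zero N y).apply_iterate k
  exact hper.mono fun x hx => Function.mk_mem_periodicPts (NeZero.pos N) hx

lemma integral_periodicApprox [IsFiniteMeasure μ] (hμ : μ.map fullShift = μ)
    (f : BoundedContinuousFunction (ℤ → M) ℝ) :
    ∫ x, f x ∂periodicApprox N μ =
      (N : ℝ)⁻¹ • ∑ k ∈ Finset.range N, ∫ y, f (periodize (k - N) k y) ∂μ := by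
  have hf : StronglyMeasurable f := f.continuous.measurable.stronglyMeasurable
  have hT (k : ℕ) : Measurable (fullShift^[k] : (ℤ → M) → ℤ → M) := measurable_fullShift.iterate k
  have hinv (k : ℕ) : μ.map fullShift^[k] = μ :=
    (MeasurePreserving.iterate ⟨measurable_fullShift, hμ⟩ k).map_eq
  have hcomp (a b : ℤ) : StronglyMeasurable fun y => f (periodize a b y) :=
    hf.comp_measurable (measurable_periodize a b)
  have hint (k : ℕ) : Integrable (f ∘ fullShift^[k]) (μ.map (periodize (-N) 0)) :=
    .of_bound (hf.comp_measurable (hT k)).aestronglyMeasurable ‖f‖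
      (.of_forall fun x => f.norm_coe_le_norm _)
  rw [periodicApprox, integral_orbitAverage measurable_fullShift hf hint]
  congr 1
  refine Finset.sum_congr rfl fun k _ => ?_
  calc ∫ x, f (fullShift^[k] x) ∂μ.map (periodize (-N) 0)
      = ∫ y, f (fullShift^[k] (periodize (-N) 0 y)) ∂μ :=
        integral_map (measurable_periodize _ _).aemeasurable
          (hf.comp_measurable (hT k)).aestronglyMeasurable
    _ = ∫ y, f (periodize (k - N) k (fullShift^[k] y)) ∂μ := by
        simp only [iterate_fullShift_periodize, neg_add_eq_sub, zero_add]
    _ = ∫ y, f (periodize (k - N) k y) ∂μ.map fullShift^[k] :=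
        (integral_map (hT k).aemeasurable (hcomp _ _).aestronglyMeasurable).symm
    _ = ∫ y, f (periodize (k - N) k y) ∂μ := by rw [hinv k]

lemma tendsto_integral_periodize [IsFiniteMeasure μ] (f : BoundedContinuousFunction (ℤ → M) ℝ) :
    Tendsto (fun p : ℤ × ℤ => ∫ y, f (periodize p.1 p.2 y) ∂μ) (atBot ×ˢ atTop)
      (𝓝 (∫ y, f y ∂μ)) := by
  refine tendsto_integral_filter_of_dominated_convergence (fun _ => ‖f‖)
    (.of_forall fun p => ?_) (.of_forall fun p => .of_forall fun y => f.norm_coe_le_norm _)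
    (integrable_const _) (.of_forall fun y => (f.continuous.tendsto y).comp (tendsto_periodize y))
  exact (f.continuous.measurable.comp (measurable_periodize _ _)).aestronglyMeasurable

lemma tendsto_integral_periodicApprox [IsProbabilityMeasure μ] (hμ : μ.map fullShift = μ)
    (f : BoundedContinuousFunction (ℤ → M) ℝ) :
    Tendsto (fun N => ∫ x, f x ∂periodicApprox N μ) atTop (𝓝 (∫ x, f x ∂μ)) := by
  have hnorm (g : (ℤ → M) → ℤ → M) : ‖∫ y, f (g y) ∂μ‖ ≤ ‖f‖ := by
    simpa using norm_integral_le_of_norm_le_const (μ := μ)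
      (.of_forall fun y => f.norm_coe_le_norm (g y))
  simp only [integral_periodicApprox hμ]
  exact tendsto_inv_smul_sum_window
    (fun a b => (norm_sub_le _ _).trans (add_le_add (hnorm _) (hnorm id)))
    (tendsto_integral_periodize f)

lemma dense_setOf_ae_mem_periodicPts [T2Space M] :
    Dense {μ : InvariantProbabilityMeasure (fullShift : (ℤ → M) → ℤ → M) |
      ∀ᵐ x ∂μ.1.toMeasure, x ∈ Function.periodicPts fullShift} := by
  intro μ
  let ν (N : ℕ) : InvariantProbabilityMeasure (fullShift : (ℤ → M) → ℤ → M) :=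
    ⟨⟨periodicApprox (N + 1) μ.1.toMeasure, isProbabilityMeasure_periodicApprox⟩,
      map_periodicApprox _ _⟩
  have hlim : Tendsto ν atTop (𝓝 μ) := by
    rw [tendsto_subtype_rng, ProbabilityMeasure.tendsto_iff_forall_integral_tendsto]
    exact fun f => (tendsto_integral_periodicApprox μ.2 f).comp (tendsto_add_atTop_nat 1)
  exact mem_closure_of_tendsto hlim (.of_forall fun N => ae_mem_periodicPts_periodicApprox)

end PeriodicApproximation

theorem fullShift_lowerRecRateZero_denseGδ_general {M : Type*} [MetricSpace M]
    [TopologicalSpace.SeparableSpace M] [MeasurableSpace M] [OpensMeasurableSpace M] :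
    IsGδ {μ : InvariantProbabilityMeasure (fullShift : (ℤ → M) → ℤ → M) |
        ∀ᵐ x ∂μ.1.toMeasure, lowerRecRate shiftDist fullShift x = 0} ∧
    Dense {μ : InvariantProbabilityMeasure (fullShift : (ℤ → M) → ℤ → M) |
        ∀ᵐ x ∂μ.1.toMeasure, lowerRecRate shiftDist fullShift x = 0} := by
  constructor
  · have hdist (n : ℕ) : Continuous fun x : ℤ → M => shiftDist (fullShift^[n] x) x :=
      continuous_shiftDist.comp ((continuous_fullShift.iterate n).prodMk continuous_id)
    exact (isGδ_setOf_ae_mem (isGδ_setOf_lowerRecRate_eq_zero hdist)).preimage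
      continuous_subtype_val
  · refine dense_setOf_ae_mem_periodicPts.mono fun μ hμ => ?_
    rw [mem_ofPred_eq] at hμ ⊢
    filter_upwards [hμ] with x hx
    exact lowerRecRate_eq_zero_of_mem_periodicPts (shiftDist_self x) hx

/-- For the full shift on `ℤ → M` over a perfect Polish metric space `M`,
the set of invariant measures whose lower recurrence rate vanishes almost everywhere is a
dense `Gδ` subset of `M(T)`. -/
theorem fullShift_lowerRecRateZero_denseGδ {M : Type*} [MetricSpace M] [CompleteSpace M]
    [TopologicalSpace.SeparableSpace M] [PerfectSpace M]
    [MeasurableSpace M] [BorelSpace M] :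
    IsGδ {μ : {ν : ProbabilityMeasure (ℤ → M) // ν.toMeasure.map fullShift = ν.toMeasure} |
        ∀ᵐ x ∂μ.1.toMeasure, lowerRecRate shiftDist fullShift x = 0} ∧
    Dense {μ : {ν : ProbabilityMeasure (ℤ → M) // ν.toMeasure.map fullShift = ν.toMeasure} |
        ∀ᵐ x ∂μ.1.toMeasure, lowerRecRate shiftDist fullShift x = 0} :=
  fullShift_lowerRecRateZero_denseGδ_general
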